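/- (First-order loss gap bound for cross-entropy) Let C ≥ 1, let y : Fin C → ℝ, let c* be the true class, let σ_c = exp(y_c)/Σ_{c'} exp(y_{c'}), and let v_c = σ_c − [c = c*] be the cross-entropy gradient. Then for every vector Δ : Fin C → ℝ, |Σ_c v_c Δ_c| ≤ 2·(1 − σ_{c*}) · max_c |Δ_c|. -/

import Mathlib

/-! The `ℓ¹` distance from a probability vector `p` to the vertex `e_j` of the simplex is
`2 (1 - p j)`: the coordinate `j` contributes the missing mass `1 - p j`, and the other coordinates
carry that same mass. The loss gap is the pairing of `Δ` with `softmax y - e_{c⋆}`, so Hölder's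
inequality for the pair `ℓ¹`, `ℓ^∞` bounds it. -/

section OrderedRing

variable {ι R : Type*} [Ring R] [LinearOrder R] [IsOrderedRing R]

theorem abs_sum_mul_le_sum_abs_mul_sup' {s : Finset ι} (hs : s.Nonempty) (f g : ι → R) :
    |∑ i ∈ s, f i * g i| ≤ (∑ i ∈ s, |f i|) * s.sup' hs (fun i ↦ |g i|) :=
  calc |∑ i ∈ s, f i * g i|
      ≤ ∑ i ∈ s, |f i * g i| := s.abs_sum_le_sum_abs _
    _ = ∑ i ∈ s, |f i| * |g i| := by simp only [abs_mul]
    _ ≤ ∑ i ∈ s, |f i| * s.sup' hs (fun i ↦ |g i|) := by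
      gcongr with i hi
      exact s.le_sup' (fun i ↦ |g i|) hi
    _ = (∑ i ∈ s, |f i|) * s.sup' hs (fun i ↦ |g i|) := (s.sum_mul _ _).symm

variable [Fintype ι] [DecidableEq ι] {p : ι → R}

theorem sum_abs_sub_ite_of_mem_stdSimplex (hp : p ∈ stdSimplex R ι) (j : ι) :
    ∑ i, |p i - if i = j then 1 else 0| = 2 * (1 - p j) := by
  have at_vertex : |p j - 1| = 1 - p j := by
    rw [abs_sub_comm, abs_of_nonneg]
    exact sub_nonneg.2 (mem_Icc_of_mem_stdSimplex hp j).2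
  have off_vertex : ∀ i ∈ Finset.univ.erase j, |p i - if i = j then 1 else 0| = p i := by
    intro i hi
    rw [if_neg (Finset.ne_of_mem_erase hi), sub_zero, abs_of_nonneg (hp.1 i)]
  have remaining_mass : ∑ i ∈ Finset.univ.erase j, p i = 1 - p j := by
    rw [Finset.sum_erase_eq_sub (Finset.mem_univ j), hp.2]
  rw [← Finset.add_sum_erase _ _ (Finset.mem_univ j), if_pos rfl, at_vertex,
    Finset.sum_congr rfl off_vertex, remaining_mass, two_mul]

theorem crossentropy_loss_gap_bound_general (hp : p ∈ stdSimplex R ι) (j : ι) (Δ : ι → R) :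
    |∑ i, (p i - if i = j then 1 else 0) * Δ i| ≤
      2 * (1 - p j) * Finset.univ.sup' ⟨j, Finset.mem_univ j⟩ (fun i ↦ |Δ i|) := by
  rw [← sum_abs_sub_ite_of_mem_stdSimplex hp j]
  exact abs_sum_mul_le_sum_abs_mul_sup' _ _ _

end OrderedRing

theorem div_sum_mem_stdSimplex {ι K : Type*} [Fintype ι] [DivisionSemiring K] [LinearOrder K]
    [IsStrictOrderedRing K] {w : ι → K} (hw : ∀ i, 0 ≤ w i) (hsum : ∑ i, w i ≠ 0) :
    (fun i ↦ w i / ∑ k, w k) ∈ stdSimplex K ι :=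
  ⟨fun i ↦ div_nonneg (hw i) (Finset.sum_nonneg fun k _ ↦ hw k),
    by rw [← Finset.sum_div, div_self hsum]⟩

/-- The softmax map, sending a vector of logits to its class probabilities; on an empty index type
it is the empty vector, which is not a probability vector. -/
noncomputable def softmax {ι : Type*} [Fintype ι] (y : ι → ℝ) (i : ι) : ℝ :=
  Real.exp (y i) / ∑ k, Real.exp (y k)

theorem softmax_mem_stdSimplex {ι : Type*} [Fintype ι] [Nonempty ι] (y : ι → ℝ) :
    softmax y ∈ stdSimplex ℝ ι :=
  div_sum_mem_stdSimplex (fun i ↦ (Real.exp_pos (y i)).le)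
    (Finset.sum_pos (fun i _ ↦ Real.exp_pos (y i)) Finset.univ_nonempty).ne'

/-- **First-order loss gap bound for cross-entropy.** With softmax probabilities
`σ_c = exp(y_c)/Σ_{c'} exp(y_{c'})` and cross-entropy gradient `v_c = σ_c − [c = c⋆]`,
for every logit-gap vector `Δ` one has `|Σ_c v_c Δ_c| ≤ 2 (1 − σ_{c⋆}) · max_c |Δ_c|`. -/
theorem crossentropy_loss_gap_bound (C : ℕ) (hC : 1 ≤ C) (y : Fin C → ℝ) (cstar : Fin C)
    (σ : Fin C → ℝ)
    (hσ : ∀ c, σ c = Real.exp (y c) / ∑ c' : Fin C, Real.exp (y c'))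
    (v : Fin C → ℝ)
    (hv : ∀ c, v c = σ c - (if c = cstar then (1 : ℝ) else 0))
    (Δ : Fin C → ℝ) :
    |∑ c : Fin C, v c * Δ c| ≤
      2 * (1 - σ cstar) *
        Finset.univ.sup' ⟨cstar, Finset.mem_univ cstar⟩ (fun c => |Δ c|) := by
  have : Nonempty (Fin C) := ⟨cstar⟩
  obtain rfl : σ = softmax y := funext hσ
  simpa only [hv] using
    crossentropy_loss_gap_bound_general (softmax_mem_stdSimplex y) cstar Δ
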